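/- arXiv:2405.05088 — 6 statements merged into one kernel-verified Lean document; each statement's English description precedes it below -/
import Mathlib

section
/- Let G and H be finitely presented groups, let K be a finitely generated group, and let φ : K →* G and ψ : K →* H be group homomorphisms. Then the amalgamated free product of G and H over K (the pushout of φ and ψ in the category of groups) is finitely presented. -/
/-- A group `G` is finitely presented if it is isomorphic to a group presented
by finitely many generators and finitely many relators. -/
def IsFinitelyPresented (G : Type*) [Group G] : Prop :=
  ∃ (n : ℕ) (R : Set (FreeGroup (Fin n))), R.Finite ∧ Nonempty (G ≃* PresentedGroup R)

/-- The amalgamated free product (pushout) of `φ : K →* G` and `ψ : K →* H`: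
the quotient of the free product `G * H` by the relations `φ k = ψ k` for all
`k : K`. -/
def AmalgamatedFreeProduct {K G H : Type*} [Group K] [Group G] [Group H]
    (φ : K →* G) (ψ : K →* H) : Type _ :=
  Monoid.Coprod G H ⧸ Subgroup.normalClosure
    {w | ∃ k : K, w = Monoid.Coprod.inl (φ k) * (Monoid.Coprod.inr (ψ k))⁻¹}

instance {K G H : Type*} [Group K] [Group G] [Group H] (φ : K →* G) (ψ : K →* H) :
    Group (AmalgamatedFreeProduct φ ψ) :=
  QuotientGroup.Quotient.group _

/-!
The free product of `G` and `H` is finitely presented, so it suffices that finitely many of the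
relations `φ k = ψ k` imply all of them. Modulo any normal subgroup, the set of `k` at which two
homomorphisms agree is a subgroup of `K`; hence the relations at a finite generating set of `K`
are enough.
-/

section Relators

variable {K L : Type*} [Group K] [Group L] (f g : K →* L)

theorem mul_inv_mem_iff_mem_eqLocus (N : Subgroup L) [N.Normal] {k : K} :
    f k * (g k)⁻¹ ∈ N ↔
      k ∈ ((QuotientGroup.mk' N).comp f).eqLocus ((QuotientGroup.mk' N).comp g) := by
  rw [← div_eq_mul_inv]
  exact QuotientGroup.eq_iff_div_mem.symm

theorem normalClosure_mul_inv_image_closure (S : Set K) :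
    Subgroup.normalClosure ((fun k ↦ f k * (g k)⁻¹) '' Subgroup.closure S) =
      Subgroup.normalClosure ((fun k ↦ f k * (g k)⁻¹) '' S) := by
  set N := Subgroup.normalClosure ((fun k ↦ f k * (g k)⁻¹) '' S)
  refine le_antisymm (Subgroup.normalClosure_le_normal ?_)
    (Subgroup.normalClosure_mono (Set.image_mono Subgroup.subset_closure))
  have closure_le_eqLocus : Subgroup.closure S ≤
      ((QuotientGroup.mk' N).comp f).eqLocus ((QuotientGroup.mk' N).comp g) :=
    (Subgroup.closure_le _).mpr fun s hs ↦ (mul_inv_mem_iff_mem_eqLocus f g N).mp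
      (Subgroup.subset_normalClosure (Set.mem_image_of_mem _ hs))
  rintro _ ⟨k, hk, rfl⟩
  exact (mul_inv_mem_iff_mem_eqLocus f g N).mpr (closure_le_eqLocus hk)

theorem isFinitelyNormallyGenerated_normalClosure_range_mul_inv [Group.FG K] :
    (Subgroup.normalClosure
      (Set.range fun k ↦ f k * (g k)⁻¹)).IsFinitelyNormallyGenerated := by
  obtain ⟨S, hS, hfin⟩ := Group.fg_iff.mp ‹Group.FG K›
  refine ⟨(fun k ↦ f k * (g k)⁻¹) '' S, hfin.image _, ?_⟩
  rw [← normalClosure_mul_inv_image_closure, hS, Subgroup.coe_top, Set.image_univ]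

end Relators

theorem isFinitelyPresented_iff_group_isFinitelyPresented {G : Type*} [Group G] :
    IsFinitelyPresented G ↔ Group.IsFinitelyPresented G := by
  refine ⟨?_, fun _ ↦ Group.IsFinitelyPresented.exists_mulEquiv_presentedGroup⟩
  rintro ⟨n, R, hR, ⟨e⟩⟩
  have : Finite R := hR
  exact Group.IsFinitelyPresented.equiv e.symm

/-- If `G` and `H` are finitely presented and `K` is finitely generated, then
the amalgamated free product of `G` and `H` over `K` is finitely presented. -/
theorem amalgamatedFreeProduct_finitelyPresented
    {K G H : Type*} [Group K] [Group G] [Group H]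
    (hG : IsFinitelyPresented G) (hH : IsFinitelyPresented H) (hK : Group.FG K)
    (φ : K →* G) (ψ : K →* H) :
    IsFinitelyPresented (AmalgamatedFreeProduct φ ψ) := by
  have := isFinitelyPresented_iff_group_isFinitelyPresented.mp hG
  have := isFinitelyPresented_iff_group_isFinitelyPresented.mp hH
  have relators_eq_range :
      {w : Monoid.Coprod G H | ∃ k, w = Monoid.Coprod.inl (φ k) * (Monoid.Coprod.inr (ψ k))⁻¹} =
        Set.range fun k ↦ Monoid.Coprod.inl (φ k) * (Monoid.Coprod.inr (ψ k))⁻¹ :=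
    Set.ext fun _ ↦ exists_congr fun _ ↦ eq_comm
  have relators_finitelyNormallyGenerated :=
    isFinitelyNormallyGenerated_normalClosure_range_mul_inv
      (Monoid.Coprod.inl.comp φ : K →* Monoid.Coprod G H) (Monoid.Coprod.inr.comp ψ)
  exact isFinitelyPresented_iff_group_isFinitelyPresented.mpr <|
    Group.IsFinitelyPresented.quotient _ (relators_eq_range ▸ relators_finitelyNormallyGenerated)
end

section
/- Let G be a finitely presented group, let A and B be subgroups of G with A finitely generated, and let φ : A ≃* B be an isomorphism. Then the HNN extension HNNExtension G A B φ is finitely presented. -/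
theorem semiconjBy_map_of_mem_closure {K H : Type*} [Group K] [Group H] {f g : K →* H} {x : H}
    {S : Set K} (hS : ∀ a ∈ S, SemiconjBy x (f a) (g a)) {a : K} (ha : a ∈ Subgroup.closure S) :
    SemiconjBy x (f a) (g a) := by
  induction ha using Subgroup.closure_induction with
  | mem a ha => exact hS a ha
  | one => simp only [map_one, SemiconjBy.one_right]
  | mul a b _ _ iha ihb => simpa only [map_mul] using iha.mul_right ihb
  | inv a _ iha => simpa only [map_inv] using iha.inv_right

section HNNPresentation

open Monoid.Coprod Multiplicative
open Monoid (Coprod)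

variable {G : Type*} [Group G] {A B : Subgroup G} (φ : A ≃* B)

/-- The canonical projection of the free product `G ∗ ℤ` onto the HNN extension, sending the
generator of `ℤ` to the stable letter. -/
def coprodToHNN : Coprod G (Multiplicative ℤ) →* HNNExtension G A B φ :=
  lift HNNExtension.of (zpowersHom _ HNNExtension.t)

/-- The relator `t a t⁻¹ φ(a)⁻¹` of the HNN extension, with `t` the generator of `ℤ` in `G ∗ ℤ`.
It follows Mathlib's convention `t a t⁻¹ = φ(a)`, which differs from `t⁻¹ a t = φ(a)` by
replacing `t` with `t⁻¹`. -/
def hnnRelator (a : A) : Coprod G (Multiplicative ℤ) :=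
  inr (ofAdd 1) * inl (a : G) * (inr (ofAdd 1))⁻¹ * (inl (φ a : G))⁻¹

@[simp]
theorem coprodToHNN_inl (g : G) : coprodToHNN φ (inl g) = HNNExtension.of g :=
  lift_apply_inl _ _ g

@[simp]
theorem coprodToHNN_inr_ofAdd_one : coprodToHNN φ (inr (ofAdd 1)) = HNNExtension.t := by
  simp [coprodToHNN]

theorem coprodToHNN_hnnRelator (a : A) : coprodToHNN φ (hnnRelator φ a) = 1 := by
  simp only [hnnRelator, map_mul, map_inv, coprodToHNN_inl, coprodToHNN_inr_ofAdd_one,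
    HNNExtension.equiv_eq_conj, mul_inv_cancel]

theorem coprodToHNN_surjective : Function.Surjective (coprodToHNN φ) := by
  intro y
  change y ∈ (coprodToHNN φ).range
  induction y using HNNExtension.induction_on with
  | of g => exact ⟨inl g, coprodToHNN_inl φ g⟩
  | t => exact ⟨inr (ofAdd 1), coprodToHNN_inr_ofAdd_one φ⟩
  | mul _ _ hx hy => exact mul_mem hx hy
  | inv _ hx => exact inv_mem hx

theorem semiconjBy_of_map_hnnRelator_eq_one {H : Type*} [Group H]
    {f : Coprod G (Multiplicative ℤ) →* H} {a : A} (h : f (hnnRelator φ a) = 1) :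
    SemiconjBy (f (inr (ofAdd 1))) (f (inl (a : G))) (f (inl (φ a : G))) := by
  simp only [hnnRelator, map_mul, map_inv] at h
  exact mul_inv_eq_iff_eq_mul.1 (mul_inv_eq_one.1 h)

theorem ker_coprodToHNN_le {H : Type*} [Group H] {f : Coprod G (Multiplicative ℤ) →* H}
    {S : Set A} (hS : Subgroup.closure S = ⊤) (hf : ∀ a ∈ S, f (hnnRelator φ a) = 1) :
    (coprodToHNN φ).ker ≤ f.ker := by
  have relation (a : A) :
      f (inr (ofAdd 1)) * f (inl (a : G)) = f (inl (φ a : G)) * f (inr (ofAdd 1)) :=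
    semiconjBy_map_of_mem_closure (f := (f.comp inl).comp A.subtype)
      (g := ((f.comp inl).comp B.subtype).comp φ.toMonoidHom)
      (fun a ha ↦ semiconjBy_of_map_hnnRelator_eq_one φ (hf a ha)) (hS ▸ Subgroup.mem_top a)
  let f' : HNNExtension G A B φ →* H := HNNExtension.lift (f.comp inl) (f (inr (ofAdd 1))) relation
  have factors : f'.comp (coprodToHNN φ) = f := by
    ext <;> simp [f']
  rw [← factors, ← MonoidHom.comap_ker]
  exact Subgroup.ker_le_comap _ _

theorem ker_coprodToHNN {S : Set A} (hS : Subgroup.closure S = ⊤) :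
    (coprodToHNN φ).ker = Subgroup.normalClosure (hnnRelator φ '' S) := by
  apply le_antisymm
  · rw [← QuotientGroup.ker_mk' (Subgroup.normalClosure (hnnRelator φ '' S))]
    refine ker_coprodToHNN_le φ hS fun a ha ↦ ?_
    exact (QuotientGroup.eq_one_iff _).2
      (Subgroup.subset_normalClosure (Set.mem_image_of_mem _ ha))
  · apply Subgroup.normalClosure_le_normal
    rintro _ ⟨a, -, rfl⟩
    exact coprodToHNN_hnnRelator φ a

theorem ker_coprodToHNN_isFinitelyNormallyGenerated (hA : A.FG) :
    (coprodToHNN φ).ker.IsFinitelyNormallyGenerated := by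
  obtain ⟨S, hS⟩ := ((Group.fg_iff_subgroup_fg A).2 hA).out
  exact ⟨hnnRelator φ '' S, S.finite_toSet.image _, (ker_coprodToHNN φ hS).symm⟩

end HNNPresentation

/-- If `G` is finitely presented, `A` and `B` are subgroups of `G` with `A`
finitely generated, and `φ : A ≃* B`, then the HNN extension
`HNNExtension G A B φ` is finitely presented. -/
theorem hnnExtension_finitelyPresented (G : Type*) [Group G]
    (hG : IsFinitelyPresented G) (A B : Subgroup G) (hA : A.FG) (φ : A ≃* B) :
    IsFinitelyPresented (HNNExtension G A B φ) := by
  rw [isFinitelyPresented_iff_group_isFinitelyPresented] at hG ⊢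
  exact .of_surjective (coprodToHNN φ) (coprodToHNN_surjective φ)
    (ker_coprodToHNN_isFinitelyNormallyGenerated φ hA)
end

section
/- Let F = FreeGroup (Fin 2) be the free group on generators x = FreeGroup.of 0 and y = FreeGroup.of 1, and let t = Multiplicative.ofAdd (1 : ℤ) be the generator of Multiplicative ℤ. In the direct product F × Multiplicative ℤ, let K be the subgroup generated by {(x, 1), (y, t)}, and let i : F →* F × Multiplicative ℤ be the inclusion of the first factor (MonoidHom.inl). Then K ⊓ i.range = Subgroup.map i (Subgroup.normalClosure {x}); that is, the intersection of K with the first factor F is exactly the image in F × Multiplicative ℤ of the normal closure of x in F. -/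
/-!
Write `N` for the normal closure of `x` and `L` for the cyclic group generated by `(y, t)`. Since
`K` projects onto the first factor, conjugating `(x, 1)` inside `K` produces all of `N × 1`, so that
`K = (N × 1) L`. By the modular law, `K` meets the first factor in `(N × 1) (L ∩ F)`, and `L ∩ F` is
trivial because `t ^ n = 1` forces `y ^ n = 1`.
-/

section

open Subgroup MonoidHom

variable {G H : Type*} [Group G] [Group H]

theorem sup_inf_assoc_of_normal_of_le {N R : Subgroup G} [N.Normal] (L : Subgroup G) (h : N ≤ R) :
    (N ⊔ L) ⊓ R = N ⊔ L ⊓ R := by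
  apply SetLike.coe_injective
  rw [coe_inf, normal_mul, normal_mul, mul_inf_assoc N L R h]

theorem map_inl_eq_prod_bot (N : Subgroup G) : N.map (inl G H) = N.prod ⊥ := by
  ext ⟨g, h⟩
  simp [mem_prod, eq_comm]

instance normal_map_inl (N : Subgroup G) [N.Normal] : (N.map (inl G H)).Normal :=
  map_inl_eq_prod_bot (H := H) N ▸ prod_normal N ⊥

theorem map_inl_normalClosure_le {s : Set G} {K : Subgroup (G × H)} (hs : inl G H '' s ⊆ K)
    (hK : K.map (fst G H) = ⊤) : (normalClosure s).map (inl G H) ≤ K := by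
  have hsurj : Function.Surjective (Prod.fst ∘ K.subtype) := by
    intro g
    obtain ⟨p, hp, rfl⟩ : g ∈ K.map (fst G H) := hK ▸ mem_top g
    exact ⟨⟨p, hp⟩, rfl⟩
  have := normal_goursatFst hsurj
  have hle : normalClosure s ≤ K.goursatFst :=
    normalClosure_le_normal fun g hg ↦ mem_goursatFst.2 (hs ⟨g, hg, rfl⟩)
  exact map_le_iff_le_comap.2 fun g hg ↦ mem_goursatFst.1 (hle hg)

theorem closure_image_inl_sup_eq_map_inl_normalClosure_sup {s : Set G} {L : Subgroup (G × H)}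
    (hs : closure s ⊔ L.map (fst G H) = ⊤) :
    closure (inl G H '' s) ⊔ L = (normalClosure s).map (inl G H) ⊔ L := by
  apply le_antisymm
  · rw [← map_closure]
    gcongr
    exact closure_le_normalClosure
  · refine sup_le (map_inl_normalClosure_le (subset_closure.trans (le_sup_left (b := L))) ?_)
      le_sup_right
    rwa [Subgroup.map_sup, ← map_closure, Subgroup.map_map, fst_comp_inl, Subgroup.map_id]

theorem closure_image_inl_sup_inf_range_inl {s : Set G} {L : Subgroup (G × H)}
    (hs : closure s ⊔ L.map (fst G H) = ⊤) (hL : Disjoint L (inl G H).range) :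
    (closure (inl G H '' s) ⊔ L) ⊓ (inl G H).range = (normalClosure s).map (inl G H) := by
  rw [closure_image_inl_sup_eq_map_inl_normalClosure_sup hs,
    sup_inf_assoc_of_normal_of_le L (map_le_range _ _), hL.eq_bot, sup_bot_eq]

theorem disjoint_zpowers_range_inl {y : G} {t : H} (hyt : orderOf y ∣ orderOf t) :
    Disjoint (zpowers (y, t)) (inl G H).range := by
  rw [disjoint_def]
  rintro _ ⟨n, rfl⟩ ⟨g, hg⟩
  have ht : t ^ n = 1 := (congrArg Prod.snd hg).symm
  have hy : y ^ n = 1 := orderOf_dvd_iff_zpow_eq_one.1 <|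
    (Int.natCast_dvd_natCast.2 hyt).trans (orderOf_dvd_iff_zpow_eq_one.2 ht)
  exact Prod.ext hy ht

theorem closure_inf_inl_range_eq_map_normalClosure_general {x y : G} {t : H}
    (hxy : closure {x, y} = ⊤) (hyt : orderOf y ∣ orderOf t) :
    closure {(x, 1), (y, t)} ⊓ (inl G H).range = (normalClosure {x}).map (inl G H) := by
  have hgen : closure {x} ⊔ (zpowers (y, t)).map (fst G H) = ⊤ := by
    rw [map_zpowers, zpowers_eq_closure, ← Subgroup.closure_union]
    exact hxy
  have hK : closure {(x, 1), (y, t)} = closure (inl G H '' {x}) ⊔ zpowers (y, t) := by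
    rw [Set.image_singleton, zpowers_eq_closure, ← Subgroup.closure_union]
    rfl
  rw [hK, closure_image_inl_sup_inf_range_inl hgen (disjoint_zpowers_range_inl hyt)]

theorem closure_freeGroup_of_zero_of_one_eq_top :
    closure {FreeGroup.of (0 : Fin 2), FreeGroup.of 1} = ⊤ := by
  rw [← FreeGroup.closure_range_of]
  congr 1
  ext
  simp [Fin.exists_fin_two, eq_comm]

theorem orderOf_ofAdd_one_eq_zero : orderOf (Multiplicative.ofAdd (1 : ℤ)) = 0 :=
  orderOf_eq_zero (not_isOfFinOrder_of_isMulTorsionFree (by decide))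

end

/-- In `F₂ × ℤ` with `F₂` free on `x, y` and `t` the generator of the infinite
cyclic group, the intersection of the subgroup `K = ⟨(x,1), (y,t)⟩` with the
first factor `F₂` is the image of the normal closure of `x` in `F₂`. -/
theorem closure_inf_inl_range_eq_map_normalClosure :
    let x : FreeGroup (Fin 2) := FreeGroup.of 0
    let y : FreeGroup (Fin 2) := FreeGroup.of 1
    let t : Multiplicative ℤ := Multiplicative.ofAdd 1
    let i : FreeGroup (Fin 2) →* FreeGroup (Fin 2) × Multiplicative ℤ :=
      MonoidHom.inl _ _
    let K : Subgroup (FreeGroup (Fin 2) × Multiplicative ℤ) :=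
      Subgroup.closure {(x, 1), (y, t)}
    K ⊓ i.range = Subgroup.map i (Subgroup.normalClosure {x}) := by
  exact closure_inf_inl_range_eq_map_normalClosure_general closure_freeGroup_of_zero_of_one_eq_top
    (orderOf_ofAdd_one_eq_zero ▸ dvd_zero _)
end

section
/- In the free group F = FreeGroup (Fin 2) on generators x = FreeGroup.of 0 and y = FreeGroup.of 1, the normal closure of {x} equals the kernel of the group homomorphism F →* Multiplicative ℤ determined by sending x to 1 and y to Multiplicative.ofAdd 1 (i.e., the homomorphism recording the exponent sum of y). -/
/-!
Modulo the normal closure `N` of the other generators, every word `w` is congruent to `y ^ e`,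
where `e` is its `y`-exponent sum. In other words the projection `F → F ⧸ N` factors through the
exponent sum, via `e ↦ y ^ e`; hence a word of exponent sum zero lies in `N`.
-/

theorem eq_ker_of_comp_eq_mk' {G H : Type*} [Group G] [MulOneClass H] {N : Subgroup G} [N.Normal]
    {f : G →* H} (hN : N ≤ f.ker) (g : H →* G ⧸ N) (hg : g.comp f = QuotientGroup.mk' N) :
    N = f.ker := by
  refine le_antisymm hN ?_
  calc f.ker ≤ (g.comp f).ker := fun w hw ↦ by simp [MonoidHom.mem_ker.1 hw]
    _ = N := by rw [hg, QuotientGroup.ker_mk']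

theorem normalClosure_image_of_eq_ker_lift {α G : Type*} [Group G] {s : Set α} {f : α → G}
    (hf : ∀ a ∈ s, f a = 1) (σ : G →* FreeGroup α)
    (hσ : ∀ a ∉ s, σ (f a) = FreeGroup.of a) :
    Subgroup.normalClosure (FreeGroup.of '' s) = (FreeGroup.lift f).ker := by
  set N := Subgroup.normalClosure (FreeGroup.of '' s)
  have le_ker : N ≤ (FreeGroup.lift f).ker :=
    Subgroup.normalClosure_le_normal <| Set.image_subset_iff.2 fun a ha ↦ by
      simp [MonoidHom.mem_ker, hf a ha]
  refine eq_ker_of_comp_eq_mk' le_ker ((QuotientGroup.mk' N).comp σ) ?_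
  ext a
  by_cases ha : a ∈ s
  · have of_mem : FreeGroup.of a ∈ N := Subgroup.subset_normalClosure ⟨a, ha, rfl⟩
    simp [hf a ha, (QuotientGroup.eq_one_iff _).2 of_mem]
  · simp [hσ a ha]

theorem normalClosure_eq_ker_exponentSum_general {α : Type*} [DecidableEq α] (y : α) :
    Subgroup.normalClosure (FreeGroup.of '' {y}ᶜ) =
      (FreeGroup.lift (Pi.mulSingle y (Multiplicative.ofAdd (1 : ℤ)))).ker := by
  refine normalClosure_image_of_eq_ker_lift (fun a ha ↦ Pi.mulSingle_eq_of_ne ha _)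
    (zpowersHom _ (FreeGroup.of y)) fun a ha ↦ ?_
  obtain rfl : a = y := not_not.1 ha
  simp

/-- In the free group on generators `x = FreeGroup.of 0` and `y = FreeGroup.of 1`,
the normal closure of `{x}` is the kernel of the homomorphism to `Multiplicative ℤ`
sending `x` to `1` and `y` to `Multiplicative.ofAdd 1` (the `y`-exponent sum). -/
theorem normalClosure_eq_ker_exponentSum :
    Subgroup.normalClosure {FreeGroup.of (0 : Fin 2)} =
      MonoidHom.ker (FreeGroup.lift
        (fun i : Fin 2 => if i = 0 then (1 : Multiplicative ℤ)
          else Multiplicative.ofAdd 1)) := by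
  have compl_one : ({1}ᶜ : Set (Fin 2)) = {0} := by ext i; fin_cases i <;> simp
  have mulSingle_one : Pi.mulSingle (1 : Fin 2) (Multiplicative.ofAdd (1 : ℤ)) =
      fun i ↦ if i = 0 then 1 else Multiplicative.ofAdd 1 := by
    ext i; fin_cases i <;> simp
  simpa only [compl_one, Set.image_singleton, mulSingle_one] using
    normalClosure_eq_ker_exponentSum_general (1 : Fin 2)
end

section
/- In the free group F = FreeGroup (Fin 2) on two generators, the normal closure of the singleton {FreeGroup.of 0} (the first generator x) is not a finitely generated subgroup. -/
/-!
Let `x` act on `ℤ` as the transposition `(0 1)` and `y` as the shift `n ↦ n + 1`. Every element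
of the normal closure `N` of `x` moves only finitely many integers, so if `N` were finitely
generated, all but finitely many integers would be fixed by all of `N`. But `N` moves `0`, and
since `N` is normal it then moves every point of the orbit of `0`, which is all of `ℤ`.
For a proper nonempty set of free generators, let its members act as `x` and the others as `y`.
-/

open MulAction Pointwise

section MulAction

variable {G α : Type*} [Group G] [MulAction G α]

lemma finite_compl_fixedBy_of_mem_normalClosure {S : Set G}
    (hS : ∀ g ∈ S, (fixedBy α g)ᶜ.Finite) {g : G} (hg : g ∈ Subgroup.normalClosure S) :
    (fixedBy α g)ᶜ.Finite := by
  refine finite_compl_fixedBy_closure_iff.mpr (fun h hh ↦ ?_) g hg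
  obtain ⟨s, hs, hconj⟩ := Group.mem_conjugatesOfSet_iff.mp hh
  obtain ⟨c, rfl⟩ := isConj_iff.mp hconj
  rw [← smul_fixedBy, ← Set.smul_set_compl]
  exact (hS s hs).smul_set

lemma finite_compl_fixedPoints_of_fg {H : Subgroup G} (hH : H.FG)
    (hfin : ∀ g ∈ H, (fixedBy α g)ᶜ.Finite) : (fixedPoints H α)ᶜ.Finite := by
  obtain ⟨S, rfl⟩ := hH
  have hgen : (⋃ g ∈ S, (fixedBy α g)ᶜ).Finite :=
    S.finite_toSet.biUnion fun g hg ↦ hfin g (Subgroup.subset_closure hg)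
  refine hgen.subset (Set.compl_subset_comm.mp fun a ha ↦ ?_)
  have hstab : Subgroup.closure (S : Set G) ≤ stabilizer G a :=
    (Subgroup.closure_le _).mpr fun g hg ↦ by
      by_contra hga
      exact ha (Set.mem_biUnion hg hga)
  exact fun g ↦ hstab g.2

lemma orbit_subset_compl_fixedPoints_of_normal {N : Subgroup G} [N.Normal] {a : α}
    (ha : a ∉ fixedPoints N α) : orbit G a ⊆ (fixedPoints N α)ᶜ := by
  rintro _ ⟨g, rfl⟩ hga
  exact ha (by simpa using smul_mem_fixedPoints_of_normal g⁻¹ hga)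

lemma not_fg_of_infinite_orbit {N : Subgroup G} [N.Normal]
    (hfin : ∀ g ∈ N, (fixedBy α g)ᶜ.Finite) {a : α} (ha : a ∉ fixedPoints N α)
    (horbit : (orbit G a).Infinite) : ¬ N.FG := fun hN ↦
  horbit <| (finite_compl_fixedPoints_of_fg hN hfin).subset
    (orbit_subset_compl_fixedPoints_of_normal ha)

end MulAction

section SwapShift

variable {ι : Type*} {s : Set ι} {i : ι}

open Classical in
/-- The action of a free group on `ℤ` in which the generators in `s` act as the transposition
`(0 1)` and all the others as the shift `n ↦ n + 1`. The normal closure of `s` then acts by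
finitely supported permutations, and the action is transitive when `s` is a proper subset. -/
noncomputable def swapShiftHom (s : Set ι) : FreeGroup ι →* Equiv.Perm ℤ :=
  FreeGroup.lift fun i ↦ if i ∈ s then Equiv.swap 0 1 else Equiv.addRight 1

lemma swapShiftHom_of_mem (hi : i ∈ s) : swapShiftHom s (FreeGroup.of i) = Equiv.swap 0 1 := by
  simp [swapShiftHom, hi]

lemma swapShiftHom_of_notMem_zpow_apply (hi : i ∉ s) (k n : ℤ) :
    swapShiftHom s (FreeGroup.of i ^ k) n = n + k := by
  simp [swapShiftHom, hi]

end SwapShift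

theorem normalClosure_of_generator_not_fg_general {ι : Type*} {s : Set ι} (hs : s.Nonempty)
    (hsc : sᶜ.Nonempty) : ¬ (Subgroup.normalClosure (FreeGroup.of '' s)).FG := by
  obtain ⟨x, hx⟩ := hs
  obtain ⟨y, hy⟩ := hsc
  let _ : MulAction (FreeGroup ι) ℤ := MulAction.compHom ℤ (swapShiftHom s)
  have hgen : ∀ g ∈ FreeGroup.of '' s, (fixedBy ℤ g)ᶜ.Finite := by
    rintro _ ⟨i, hi, rfl⟩
    change (fixedBy ℤ (swapShiftHom s (FreeGroup.of i)))ᶜ.Finite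
    rw [swapShiftHom_of_mem hi]
    exact finite_compl_fixedBy_swap
  have hmoved : (0 : ℤ) ∉ fixedPoints (Subgroup.normalClosure (FreeGroup.of '' s)) ℤ := by
    intro h
    have hx0 : swapShiftHom s (FreeGroup.of x) 0 = 0 :=
      h ⟨_, Subgroup.subset_normalClosure (Set.mem_image_of_mem _ hx)⟩
    simp [swapShiftHom_of_mem hx] at hx0
  have horbit : orbit (FreeGroup ι) (0 : ℤ) = Set.univ := Set.eq_univ_of_forall fun n ↦
    ⟨FreeGroup.of y ^ n, (swapShiftHom_of_notMem_zpow_apply hy n 0).trans (zero_add n)⟩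
  exact not_fg_of_infinite_orbit
    (fun _ ↦ finite_compl_fixedBy_of_mem_normalClosure hgen) hmoved
    (horbit ▸ Set.infinite_univ)

/-- In the free group on two generators, the normal closure of the first
generator is not a finitely generated subgroup. -/
theorem normalClosure_of_generator_not_fg :
    ¬ (Subgroup.normalClosure {FreeGroup.of (0 : Fin 2)}).FG := by
  rw [← Set.image_singleton]
  exact normalClosure_of_generator_not_fg_general (Set.singleton_nonempty 0) ⟨1, by simp⟩
end

section
/- The group FreeGroup (Fin 2) × Multiplicative ℤ does not have the finitely generated intersection property: there exist finitely generated subgroups H and K of FreeGroup (Fin 2) × Multiplicative ℤ such that H ⊓ K is not finitely generated. Specifically, one may take H to be the image of the first-factor inclusion FreeGroup (Fin 2) →* FreeGroup (Fin 2) × Multiplicative ℤ and K to be the subgroup generated by {(x, 1), (y, t)}, where x, y are the free generators and t = Multiplicative.ofAdd 1. -/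
/-!
Let `F₂` act on `ℤ` with `x` swapping `0` and `1` and `y` translating by `1`. On the generators of
`K`, hence on all of `K`, the action of the first coordinate agrees, up to finitely many points,
with translation by the second coordinate. So every element of `H ⊓ K` moves only finitely many
points, and if `H ⊓ K` were finitely generated, almost every point would be fixed by all of it.
But `H ⊓ K` contains the conjugates `yⁿ x y⁻ⁿ`, which act as the transpositions `(n n+1)`, and
these move every integer.
-/

open Equiv Filter

theorem eventually_forall_mem_smul_eq_of_fg {G X : Type*} [Group G] [MulAction G X]
    {N : Subgroup G} (hN : N.FG) {l : Filter X} (h : ∀ g ∈ N, ∀ᶠ p in l, g • p = p) :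
    ∀ᶠ p in l, ∀ g ∈ N, g • p = p := by
  obtain ⟨S, rfl⟩ := hN
  have hS : ∀ᶠ p in l, ∀ s ∈ S, s • p = p :=
    (eventually_all_finset S).2 fun s hs => h s (Subgroup.subset_closure hs)
  filter_upwards [hS] with p hp
  exact (Subgroup.closure_le (MulAction.stabilizer G p)).2 hp

/-- The almost-everywhere analogue of `MonoidHom.eqLocus` for two actions `φ`, `ψ` of `G` on `X`:
the subgroup of those `g` for which `φ g` and `ψ g` agree at all but finitely many points. -/
def almostEqLocus {G X : Type*} [Group G] (φ ψ : G →* Perm X) : Subgroup G where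
  carrier := {g | ⇑(φ g) =ᶠ[cofinite] ψ g}
  one_mem' := by simp
  mul_mem' {g h} (hg : φ g =ᶠ[cofinite] ψ g) (hh : φ h =ᶠ[cofinite] ψ h) := by
    have hgh : φ g ∘ φ h =ᶠ[cofinite] ψ g ∘ ψ h :=
      (hg.comp_tendsto (φ h).injective.tendsto_cofinite).trans (hh.fun_comp (ψ g))
    simpa only [Set.mem_ofPred_eq, map_mul, Perm.coe_mul] using hgh
  inv_mem' {g} hg := by
    filter_upwards [(φ g⁻¹).injective.tendsto_cofinite.eventually hg] with p hp
    calc φ g⁻¹ p = ψ g⁻¹ (ψ g (φ g⁻¹ p)) := by simp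
      _ = ψ g⁻¹ (φ g (φ g⁻¹ p)) := by rw [hp]
      _ = ψ g⁻¹ p := by simp

theorem mem_almostEqLocus {G X : Type*} [Group G] {φ ψ : G →* Perm X} {g : G} :
    g ∈ almostEqLocus φ ψ ↔ φ g =ᶠ[cofinite] ψ g :=
  Iff.rfl

section InfClosure

variable {G X : Type*} [Group G] {x y : G} {ρ : G →* Perm X}

theorem closure_le_almostEqLocus (hx : ρ x =ᶠ[cofinite] id) :
    Subgroup.closure {(x, 1), (y, Multiplicative.ofAdd 1)} ≤
      almostEqLocus (ρ.comp (MonoidHom.fst G (Multiplicative ℤ)))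
        ((zpowersHom (Perm X) (ρ y)).comp (MonoidHom.snd G (Multiplicative ℤ))) := by
  rw [Subgroup.closure_le, Set.pair_subset_iff]
  constructor
  · simpa [mem_almostEqLocus] using hx
  · simp [mem_almostEqLocus]

theorem eventually_apply_fst_eq_of_mem_range_inl_inf_closure (hx : ρ x =ᶠ[cofinite] id)
    {g : G × Multiplicative ℤ} (hg : g ∈ (MonoidHom.inl G (Multiplicative ℤ)).range ⊓
      Subgroup.closure {(x, 1), (y, Multiplicative.ofAdd 1)}) :
    ∀ᶠ p in cofinite, ρ g.1 p = p := by
  obtain ⟨⟨w, rfl⟩, hK⟩ := hg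
  filter_upwards [mem_almostEqLocus.1 (closure_le_almostEqLocus hx hK)] with p hp
  simpa using hp

theorem inl_zpow_conj_mem_range_inl_inf_closure (x y : G) (n : ℤ) :
    MonoidHom.inl G (Multiplicative ℤ) (y ^ n * x * (y ^ n)⁻¹) ∈
      (MonoidHom.inl G (Multiplicative ℤ)).range ⊓
        Subgroup.closure {(x, 1), (y, Multiplicative.ofAdd 1)} := by
  set K : Subgroup (G × Multiplicative ℤ) :=
    Subgroup.closure {(x, 1), (y, Multiplicative.ofAdd 1)}
  have hxK : (x, 1) ∈ K := Subgroup.subset_closure (Set.mem_insert _ _)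
  have hyK : (y, Multiplicative.ofAdd 1) ∈ K :=
    Subgroup.subset_closure (Set.mem_insert_of_mem _ rfl)
  have hconj : MonoidHom.inl G (Multiplicative ℤ) (y ^ n * x * (y ^ n)⁻¹) =
      (y, Multiplicative.ofAdd 1) ^ n * (x, 1) * ((y, Multiplicative.ofAdd 1) ^ n)⁻¹ := by
    ext <;> simp
  refine ⟨⟨_, rfl⟩, ?_⟩
  rw [hconj]
  exact K.mul_mem (K.mul_mem (K.zpow_mem hyK n) hxK) (K.inv_mem (K.zpow_mem hyK n))

theorem eventually_forall_zpow_conj_apply_eq_of_fg (hx : ρ x =ᶠ[cofinite] id)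
    (hfg : ((MonoidHom.inl G (Multiplicative ℤ)).range ⊓
      Subgroup.closure {(x, 1), (y, Multiplicative.ofAdd 1)}).FG) :
    ∀ᶠ p in cofinite, ∀ n : ℤ, ρ (y ^ n * x * (y ^ n)⁻¹) p = p := by
  let _ : MulAction (G × Multiplicative ℤ) X :=
    MulAction.compHom X (ρ.comp (MonoidHom.fst G (Multiplicative ℤ)))
  filter_upwards [eventually_forall_mem_smul_eq_of_fg hfg fun g hg =>
    eventually_apply_fst_eq_of_mem_range_inl_inf_closure hx hg] with p hp n
  exact hp _ (inl_zpow_conj_mem_range_inl_inf_closure x y n)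

end InfClosure

theorem swap_eventuallyEq_id {X : Type*} [DecidableEq X] (a b : X) :
    swap a b =ᶠ[cofinite] id := by
  filter_upwards [eventually_cofinite_ne a, eventually_cofinite_ne b] with p ha hb
  exact swap_apply_of_ne_of_ne ha hb

theorem addRight_one_zpow_conj_swap (n : ℤ) :
    Equiv.addRight (1 : ℤ) ^ n * swap 0 1 * (Equiv.addRight (1 : ℤ) ^ n)⁻¹ = swap n (n + 1) := by
  rw [← swap_apply_apply]
  simp [add_comm]

theorem not_fg_range_inl_inf_closure {G : Type*} [Group G] {x y : G} {ρ : G →* Perm ℤ}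
    (hx : ρ x = swap 0 1) (hy : ρ y = Equiv.addRight 1) :
    ¬ ((MonoidHom.inl G (Multiplicative ℤ)).range ⊓
      Subgroup.closure {(x, 1), (y, Multiplicative.ofAdd 1)}).FG := by
  intro hfg
  have hρx : ρ x =ᶠ[cofinite] id := hx ▸ swap_eventuallyEq_id 0 1
  obtain ⟨p, hp⟩ := (eventually_forall_zpow_conj_apply_eq_of_fg hρx hfg).exists
  have hfix : swap p (p + 1) p = p := by
    simpa only [map_mul, map_inv, map_zpow, hx, hy, addRight_one_zpow_conj_swap] using hp p
  simp at hfix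

theorem freeGroup_prod_int_not_fgip_general {α : Type*} [Finite α] {a b : α} (hab : a ≠ b) :
    let x : FreeGroup α := FreeGroup.of a
    let y : FreeGroup α := FreeGroup.of b
    let t : Multiplicative ℤ := Multiplicative.ofAdd 1
    let H : Subgroup (FreeGroup α × Multiplicative ℤ) :=
      (MonoidHom.inl (FreeGroup α) (Multiplicative ℤ)).range
    let K : Subgroup (FreeGroup α × Multiplicative ℤ) :=
      Subgroup.closure {(x, 1), (y, t)}
    H.FG ∧ K.FG ∧ ¬ (H ⊓ K).FG := by
  classical
  intro x y t H K
  let ρ : FreeGroup α →* Perm ℤ :=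
    FreeGroup.lift (Function.update (fun _ => Equiv.addRight 1) a (swap 0 1))
  have hx : ρ x = swap 0 1 := by simp [ρ, x]
  have hy : ρ y = Equiv.addRight 1 := by simp [ρ, y, hab.symm]
  exact ⟨(Group.fg_iff_subgroup_fg H).1 (Group.fg_range _),
    (Subgroup.fg_iff K).2 ⟨_, rfl, Set.toFinite _⟩, not_fg_range_inl_inf_closure hx hy⟩

/-- `F₂ × ℤ` does not have the finitely generated intersection property:
the image `H` of the first-factor inclusion and the subgroup
`K = ⟨(x,1), (y,t)⟩` are finitely generated, but `H ⊓ K` is not. -/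
theorem freeGroup_prod_int_not_fgip :
    let x : FreeGroup (Fin 2) := FreeGroup.of 0
    let y : FreeGroup (Fin 2) := FreeGroup.of 1
    let t : Multiplicative ℤ := Multiplicative.ofAdd 1
    let H : Subgroup (FreeGroup (Fin 2) × Multiplicative ℤ) :=
      (MonoidHom.inl (FreeGroup (Fin 2)) (Multiplicative ℤ)).range
    let K : Subgroup (FreeGroup (Fin 2) × Multiplicative ℤ) :=
      Subgroup.closure {(x, 1), (y, t)}
    H.FG ∧ K.FG ∧ ¬ (H ⊓ K).FG :=
  freeGroup_prod_int_not_fgip_general zero_ne_one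
end
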